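/- For all i ≠ j in {1,…,r}, the q-Serre relation holds in the q-shuffle algebra: Σ_{k+l=1−a_{ij}} (−1)^k [1−a_{ij} choose k]_i · w_i^{*k} * w_j * w_i^{*l} = 0, where w_i^{*k} denotes the k-fold q-shuffle power w_i * w_i * ⋯ * w_i (k factors). -/

import Mathlib

open scoped BigOperators

noncomputable section

/-- The field `ℚ(q)` of rational functions over `ℚ`. -/
abbrev K : Type := RatFunc ℚ

/-- The indeterminate `q`. -/
abbrev qq : K := RatFunc.X

/-- Words on the alphabet `{w_1, …, w_r}` (the free monoid `M`). -/
abbrev Word (r : ℕ) := List (Fin r)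

/-- The space `F` with basis the words, as finitely supported families of coefficients. -/
abbrev FA (r : ℕ) := Word r →₀ K

variable {r : ℕ}

/-- `(|w|, |x|)` : the symmetric bilinear form evaluated on the degrees of two words,
where `p i j = (α_i, α_j)` is the form on simple roots. -/
def pairW (p : Fin r → Fin r → ℤ) (w x : Word r) : ℤ :=
  (w.map fun i => (x.map fun j => p i j).sum).sum

/-- Auxiliary q-shuffle on *reversed* words:
`shAux p w x` is the q-shuffle of `w.reverse` and `x.reverse`; it implements the recursion
`(w·a) * (x·b) = (w * (x·b))·a + q^{-(|w·a|,|b|)} ((w·a) * x)·b`, `w[] * x = x * w[] = x`. -/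
def shAux (p : Fin r → Fin r → ℤ) : Word r → Word r → FA r
  | [], x => Finsupp.single x.reverse 1
  | w, [] => Finsupp.single w.reverse 1
  | a :: w, b :: x =>
      Finsupp.mapDomain (fun u => u ++ [a]) (shAux p w (b :: x))
      + (qq ^ (-(pairW p (a :: w) [b]))) •
          Finsupp.mapDomain (fun u => u ++ [b]) (shAux p (a :: w) x)
  termination_by w x => w.length + x.length
  decreasing_by all_goals (first | (simp only [List.length_cons]; omega) | omega)

/-- The q-shuffle product `*` on `F`, extended bilinearly from words. -/
def shuffle (p : Fin r → Fin r → ℤ) (f g : FA r) : FA r :=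
  f.sum fun w c => g.sum fun x d => (c * d) • shAux p w.reverse x.reverse

/-- `k`-fold power for the q-shuffle product (the empty word for `k = 0`). -/
def shPow (p : Fin r → Fin r → ℤ) (f : FA r) : ℕ → FA r
  | 0 => Finsupp.single ([] : Word r) 1
  | k + 1 => shuffle p f (shPow p f k)

/-- The q-integer `[n]_i = (q_i^n − q_i^{−n})/(q_i − q_i^{−1})` with `q_i = q^{d_i}`. -/
def qInt (di : ℤ) (n : ℤ) : K :=
  (qq ^ (di * n) - qq ^ (-(di * n))) / (qq ^ di - qq ^ (-di))

/-- The q-binomial coefficient `[m choose k]_i = [m]_i⋯[m−k+1]_i / ([k]_i⋯[1]_i)`. -/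
def qBinom (di : ℤ) (m k : ℕ) : K :=
  (∏ t ∈ Finset.range k, qInt di ((m : ℤ) - t)) / (∏ t ∈ Finset.range k, qInt di ((t : ℤ) + 1))

/-- The data of the Cartan matrix `[a_{ij}]` of a finite-dimensional complex simple
Lie algebra of rank `r`: an integral matrix with `2` on the diagonal and nonpositive
off-diagonal entries, symmetrizable by `d_i ∈ {1,2,3}`, whose symmetrization
`(α_i, α_j) = d_i a_{ij}` is positive definite, and which is indecomposable. -/
structure CartanData (r : ℕ) where
  a : Fin r → Fin r → ℤ
  d : Fin r → ℤ
  diag : ∀ i, a i i = 2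
  offdiag : ∀ i j, i ≠ j → a i j ≤ 0
  dval : ∀ i, d i = 1 ∨ d i = 2 ∨ d i = 3
  dsymm : ∀ i j, d i * a i j = d j * a j i
  posdef : ∀ v : Fin r → ℚ, v ≠ 0 → 0 < ∑ i, ∑ j, v i * v j * ((d i * a i j : ℤ) : ℚ)
  indec : ∀ s : Finset (Fin r), s.Nonempty → s ≠ Finset.univ →
    ∃ i ∈ s, ∃ j, j ∉ s ∧ a i j ≠ 0

/-- The symmetric bilinear form `(α_i, α_j) = d_i a_{ij}` on simple roots. -/
def CartanData.p (C : CartanData r) : Fin r → Fin r → ℤ := fun i j => C.d i * C.a i j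

/-!
Removing a final letter `c` from every word is a skew derivation `∂_c` of the `q`-shuffle algebra,
and an element without constant term that is killed by all `∂_c` vanishes. The Serre sum is an
iterated `q`-commutator: set `Y_0 = w_j` and
`Y_{m+1} = Y_m * w_i - q^{-(m (α_i, α_i) + (α_j, α_i))} w_i * Y_m`. The exponent is chosen so that
`∂_i` kills every `Y_m`, and `∂_j` maps `Y_m` to
`∏_{t < m} (1 - q^{-(t (α_i, α_i) + 2 (α_i, α_j))}) w_i^{*m}`, whose factor with `t = -a_{ij}` is
zero. Hence `Y_{1 - a_{ij}} = 0`, and the `q`-Pascal rule expands it into the Serre sum.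
-/

theorem qq_zpow_add (m n : ℤ) : qq ^ (m + n) = qq ^ m * qq ^ n :=
  zpow_add₀ RatFunc.X_ne_zero m n

theorem intDegree_qq_zpow (n : ℤ) : (qq ^ n).intDegree = n := by
  induction n with
  | zero => simp
  | succ n ih =>
    rw [qq_zpow_add, RatFunc.intDegree_mul (zpow_ne_zero _ RatFunc.X_ne_zero)
      (zpow_ne_zero _ RatFunc.X_ne_zero), ih, zpow_one, RatFunc.intDegree_X]
  | pred n ih =>
    rw [sub_eq_add_neg, qq_zpow_add, RatFunc.intDegree_mul (zpow_ne_zero _ RatFunc.X_ne_zero)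
      (zpow_ne_zero _ RatFunc.X_ne_zero), ih, zpow_neg_one, RatFunc.intDegree_inv,
      RatFunc.intDegree_X]

theorem qq_zpow_injective : Function.Injective fun n : ℤ => qq ^ n :=
  Function.LeftInverse.injective intDegree_qq_zpow

theorem qq_zpow_sub_zpow_neg_ne_zero {n : ℤ} (hn : n ≠ 0) : qq ^ n - qq ^ (-n) ≠ 0 :=
  sub_ne_zero.mpr (qq_zpow_injective.ne (self_ne_neg.mpr hn))

theorem qInt_zero (d : ℤ) : qInt d 0 = 0 := by simp [qInt]

theorem qInt_ne_zero {d n : ℤ} (hd : d ≠ 0) (hn : n ≠ 0) : qInt d n ≠ 0 :=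
  div_ne_zero (qq_zpow_sub_zpow_neg_ne_zero (mul_ne_zero hd hn)) (qq_zpow_sub_zpow_neg_ne_zero hd)

theorem qInt_add (d s t : ℤ) :
    qInt d (s + t) = qq ^ (d * t) * qInt d s + qq ^ (-(d * s)) * qInt d t := by
  simp only [qInt, ← mul_div_assoc, ← add_div, mul_sub, ← qq_zpow_add]
  ring_nf

theorem qBinom_zero_right (d : ℤ) (m : ℕ) : qBinom d m 0 = 1 := by simp [qBinom]

theorem qBinom_self_succ (d : ℤ) (m : ℕ) : qBinom d m (m + 1) = 0 := by
  simp [qBinom, Finset.prod_range_succ, qInt_zero]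

theorem qBinom_succ_right_mul_qInt {d : ℤ} (hd : d ≠ 0) (m k : ℕ) :
    qBinom d m (k + 1) * qInt d (k + 1) = qBinom d m k * qInt d (m - k) := by
  have hk := qInt_ne_zero hd (n := k + 1) (by omega)
  simp only [qBinom, Finset.prod_range_succ]
  field_simp

theorem qBinom_succ_succ_mul_qInt {d : ℤ} (hd : d ≠ 0) (m k : ℕ) :
    qBinom d (m + 1) (k + 1) * qInt d (k + 1) = qBinom d m k * qInt d (m + 1) := by
  have hk := qInt_ne_zero hd (n := k + 1) (by omega)
  rw [qBinom, Finset.prod_range_succ', qBinom, Finset.prod_range_succ]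
  simp only [Nat.cast_zero, sub_zero, Nat.cast_succ, add_sub_add_right_eq_sub]
  field_simp

theorem qBinom_succ_succ {d : ℤ} (hd : d ≠ 0) (m k : ℕ) :
    qBinom d (m + 1) (k + 1) =
      qq ^ (d * (k + 1)) * qBinom d m (k + 1) + qq ^ (d * (k - m)) * qBinom d m k := by
  have hadd : qInt d (m + 1) =
      qq ^ (d * (k + 1)) * qInt d (m - k) + qq ^ (d * (k - m)) * qInt d (k + 1) := by
    have h := qInt_add d (m - k) (k + 1)
    rwa [← mul_neg, neg_sub, ← add_assoc, sub_add_cancel] at h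
  apply mul_right_cancel₀ (qInt_ne_zero hd (n := k + 1) (by omega))
  rw [qBinom_succ_succ_mul_qInt hd, hadd]
  linear_combination -qq ^ (d * (k + 1)) * qBinom_succ_right_mul_qInt hd m k

section IterQComm

variable {R A : Type*} [CommRing R] [Ring A] [Algebra R A]

/-- The iterated twisted commutator `[⋯[[y, x]_{c 0}, x]_{c 1}, ⋯, x]_{c (m - 1)}`,
where `[u, x]_c = u * x - c • (x * u)`. -/
def iterQComm (c : ℕ → R) (x y : A) : ℕ → A
  | 0 => y
  | m + 1 => iterQComm c x y m * x - c m • (x * iterQComm c x y m)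

theorem iterQComm_eq_sum_of_pascal {c : ℕ → R} {b : ℕ → ℕ → R} (hb_zero : ∀ m, b m 0 = 1)
    (hb_self : ∀ m, b m (m + 1) = 0)
    (hb_succ : ∀ m k, b (m + 1) (k + 1) = b m (k + 1) - c m * b m k) (x y : A) (m : ℕ) :
    iterQComm c x y m = ∑ k ∈ Finset.range (m + 1), b m k • (x ^ k * y * x ^ (m - k)) := by
  induction m with
  | zero => simp [iterQComm, hb_zero]
  | succ m ih =>
    have hright : iterQComm c x y m * x =
        ∑ k ∈ Finset.range (m + 2), b m k • (x ^ k * y * x ^ (m + 1 - k)) := by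
      rw [Finset.sum_range_succ, hb_self, zero_smul, add_zero, ih, Finset.sum_mul]
      refine Finset.sum_congr rfl fun k hk => ?_
      rw [Nat.sub_add_comm (Finset.mem_range_succ_iff.mp hk), pow_succ, smul_mul_assoc, mul_assoc]
    have hleft : x * iterQComm c x y m =
        ∑ k ∈ Finset.range (m + 1), b m k • (x ^ (k + 1) * y * x ^ (m - k)) := by
      simp only [ih, Finset.mul_sum, mul_smul_comm, pow_succ', mul_assoc]
    rw [iterQComm, hright, hleft, Finset.sum_range_succ', Finset.sum_range_succ' _ (m + 1),
      Finset.smul_sum, hb_zero, hb_zero, add_sub_right_comm, ← Finset.sum_sub_distrib]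
    simp only [hb_succ, sub_smul, mul_smul, Nat.add_sub_add_right]

theorem iterQComm_eq_sum_qBinom [Algebra K A] {d : ℤ} (hd : d ≠ 0) (e : ℤ) (x y : A) (m : ℕ) :
    iterQComm (fun t : ℕ => qq ^ (-(t * (2 * d) + e))) x y m =
      ∑ k ∈ Finset.range (m + 1),
        ((-1 : K) ^ k * qq ^ (-(k * (d * (m - 1) + e))) * qBinom d m k) •
          (x ^ k * y * x ^ (m - k)) := by
  refine iterQComm_eq_sum_of_pascal
    (b := fun m k : ℕ => (-1 : K) ^ k * qq ^ (-(k * (d * (m - 1) + e))) * qBinom d m k)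
    (fun m => by simp [qBinom_zero_right]) (fun m => by simp [qBinom_self_succ])
    (fun m k => ?_) x y m
  have hexp_right : qq ^ (-((k + 1) * (d * m + e))) * qq ^ (d * (k + 1)) =
      qq ^ (-((k + 1) * (d * (m - 1) + e))) := by
    rw [← qq_zpow_add]
    ring_nf
  have hexp_left : qq ^ (-((k + 1) * (d * m + e))) * qq ^ (d * (k - m)) =
      qq ^ (-(m * (2 * d) + e)) * qq ^ (-(k * (d * (m - 1) + e))) := by
    rw [← qq_zpow_add, ← qq_zpow_add]
    ring_nf
  simp only [qBinom_succ_succ hd, pow_succ, Nat.cast_succ, add_sub_cancel_right]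
  linear_combination (-1 : K) ^ k * (-qBinom d m (k + 1) * hexp_right - qBinom d m k * hexp_left)

end IterQComm

theorem pairW_append_left (p : Fin r → Fin r → ℤ) (w x y : Word r) :
    pairW p (w ++ x) y = pairW p w y + pairW p x y := by
  simp [pairW]

theorem pairW_reverse_left (p : Fin r → Fin r → ℤ) (w x : Word r) :
    pairW p w.reverse x = pairW p w x := by
  simp [pairW, List.sum_reverse]

theorem shAux_nil_right (p : Fin r → Fin r → ℤ) (w : Word r) :
    shAux p w [] = Finsupp.single w.reverse 1 := by
  cases w <;> simp [shAux]

/-- The `q`-shuffle product as a bilinear map, the source of the distributive laws for `shuffle`. -/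
def shuffleBilin (p : Fin r → Fin r → ℤ) : FA r →ₗ[K] FA r →ₗ[K] FA r :=
  Finsupp.linearCombination K fun w =>
    Finsupp.linearCombination K fun x => shAux p w.reverse x.reverse

theorem shuffle_eq_shuffleBilin (p : Fin r → Fin r → ℤ) (f g : FA r) :
    shuffle p f g = shuffleBilin p f g := by
  simp only [shuffle, shuffleBilin, Finsupp.linearCombination_apply, Finsupp.sum,
    LinearMap.sum_apply, LinearMap.smul_apply, Finset.smul_sum, mul_smul]

/-- The `q`-shuffle algebra: a copy of `FA r` whose ring multiplication is `shuffle p`. The copy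
keeps it apart from the pointwise multiplication that `FA r` already carries. -/
def QShuffle (_p : Fin r → Fin r → ℤ) : Type := FA r

namespace QShuffle

variable {p : Fin r → Fin r → ℤ}

instance : AddCommGroup (QShuffle p) := inferInstanceAs (AddCommGroup (FA r))

instance : Module K (QShuffle p) := inferInstanceAs (Module K (FA r))

instance : Mul (QShuffle p) := ⟨shuffle p⟩

theorem mul_eq_shuffleBilin (f g : QShuffle p) : f * g = shuffleBilin p f g :=
  shuffle_eq_shuffleBilin p f g

instance : NonUnitalNonAssocRing (QShuffle p) where
  left_distrib f g h := by
    simp only [mul_eq_shuffleBilin]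
    exact map_add (shuffleBilin p f) g h
  right_distrib f g h := by
    simp only [mul_eq_shuffleBilin]
    exact LinearMap.map_add₂ (shuffleBilin p) f g h
  zero_mul f := (mul_eq_shuffleBilin 0 f).trans (LinearMap.map_zero₂ (shuffleBilin p) f)
  mul_zero f := (mul_eq_shuffleBilin f 0).trans (map_zero (shuffleBilin p f))

instance : IsScalarTower K (QShuffle p) (QShuffle p) where
  smul_assoc a f g := by
    simp only [smul_eq_mul, mul_eq_shuffleBilin]
    exact LinearMap.map_smul₂ (shuffleBilin p) a f g

instance : SMulCommClass K (QShuffle p) (QShuffle p) where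
  smul_comm a f g := by
    simp only [smul_eq_mul, mul_eq_shuffleBilin]
    exact (map_smul (shuffleBilin p f) a g).symm

/-- The basis element of the `q`-shuffle algebra given by a word. -/
def word (w : Word r) : QShuffle p := Finsupp.single w (1 : K)

/-- The coefficient of a word, as a linear form on the `q`-shuffle algebra. -/
def coeff (u : Word r) : QShuffle p →ₗ[K] K := Finsupp.lapply (R := K) u

/-- Appending a letter at the end of every word. -/
def snoc (a : Fin r) : QShuffle p →ₗ[K] QShuffle p :=
  Finsupp.lmapDomain K K fun u : Word r => u ++ [a]

/-- Removal of the last letter `c`, killing the words that do not end in `c`. -/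
def lastDeriv (c : Fin r) : QShuffle p →ₗ[K] QShuffle p :=
  Finsupp.lcomapDomain (R := K) (M := K) (fun u : Word r => u ++ [c])
    (List.append_left_injective [c])

/-- The diagonal map `w ↦ q ^ (-(|w|, α_c)) • w`, which makes `lastDeriv c` a skew derivation. -/
def twist (c : Fin r) : QShuffle p →ₗ[K] QShuffle p :=
  Finsupp.linearCombination K fun w => qq ^ (-pairW p w [c]) • word w

theorem ext_coeff {f g : QShuffle p} (h : ∀ u, coeff u f = coeff u g) : f = g :=
  Finsupp.ext h

theorem hom_ext {M : Type*} [AddCommGroup M] [Module K M] {F G : QShuffle p →ₗ[K] M}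
    (h : ∀ w, F (word w) = G (word w)) : F = G :=
  Finsupp.lhom_ext' fun w => LinearMap.ext_ring (h w)

theorem hom_ext₂ {M : Type*} [AddCommGroup M] [Module K M]
    {F G : QShuffle p →ₗ[K] QShuffle p →ₗ[K] M}
    (h : ∀ w x, F (word w) (word x) = G (word w) (word x)) : F = G :=
  hom_ext fun w => hom_ext (h w)

theorem coeff_word (u w : Word r) : coeff u (word w : QShuffle p) = if w = u then 1 else 0 :=
  Finsupp.single_apply

theorem coeff_lastDeriv (c : Fin r) (f : QShuffle p) (u : Word r) :
    coeff u (lastDeriv c f) = coeff (u ++ [c]) f :=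
  rfl

theorem snoc_word (a : Fin r) (w : Word r) : snoc a (word w : QShuffle p) = word (w ++ [a]) :=
  Finsupp.mapDomain_single

theorem coeff_nil_snoc (a : Fin r) (f : QShuffle p) : coeff [] (snoc a f) = 0 :=
  Finsupp.mapDomain_of_notMem_range _ _ (by simp)

theorem lastDeriv_snoc (c a : Fin r) (f : QShuffle p) :
    lastDeriv c (snoc a f) = if a = c then f else 0 := by
  split_ifs with hac
  · subst hac
    exact Finsupp.leftInverse_lcomapDomain_mapDomain _ _ f
  · exact ext_coeff fun u => Finsupp.mapDomain_of_notMem_range _ _ (by simpa using hac)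

theorem lastDeriv_word_append (c a : Fin r) (w : Word r) :
    lastDeriv c (word (w ++ [a]) : QShuffle p) = if a = c then word w else 0 := by
  rw [← snoc_word, lastDeriv_snoc]

theorem lastDeriv_word_nil (c : Fin r) : lastDeriv c (word [] : QShuffle p) = 0 :=
  ext_coeff fun u => (coeff_lastDeriv c _ u).trans (Finsupp.single_eq_of_ne (by simp))

theorem eq_zero_of_lastDeriv_eq_zero {f : QShuffle p} (h_nil : coeff [] f = 0)
    (h_deriv : ∀ c, lastDeriv c f = 0) : f = 0 := by
  refine ext_coeff fun u => ?_
  rw [map_zero]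
  rcases List.eq_nil_or_concat' u with rfl | ⟨u, c, rfl⟩
  · exact h_nil
  · rw [← coeff_lastDeriv, h_deriv, map_zero]

theorem twist_word (c : Fin r) (w : Word r) :
    twist c (word w : QShuffle p) = qq ^ (-pairW p w [c]) • word w :=
  (Finsupp.linearCombination_single K 1 w).trans (one_smul _ _)

theorem coeff_twist (c : Fin r) (f : QShuffle p) (u : Word r) :
    coeff u (twist c f) = qq ^ (-pairW p u [c]) * coeff u f := by
  suffices h : (coeff u).comp (twist c) =
      qq ^ (-pairW p u [c]) • (coeff u : QShuffle p →ₗ[K] K) from LinearMap.congr_fun h f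
  refine hom_ext fun w => ?_
  rw [LinearMap.comp_apply, twist_word, map_smul, LinearMap.smul_apply, coeff_word]
  by_cases hwu : w = u <;> simp [hwu]

theorem twist_comm (a c : Fin r) (f : QShuffle p) : twist a (twist c f) = twist c (twist a f) :=
  ext_coeff fun u => by simp only [coeff_twist, mul_left_comm]

theorem lastDeriv_twist (a c : Fin r) (f : QShuffle p) :
    lastDeriv a (twist c f) = qq ^ (-p a c) • twist c (lastDeriv a f) := by
  refine ext_coeff fun u => ?_
  have hpair : pairW p (u ++ [a]) [c] = p a c + pairW p u [c] := by
    rw [pairW_append_left, add_comm]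
    simp [pairW]
  rw [coeff_lastDeriv, coeff_twist, map_smul, coeff_twist, coeff_lastDeriv, hpair, neg_add,
    qq_zpow_add, smul_eq_mul, mul_assoc]

theorem word_mul_word (w x : Word r) :
    (word w * word x : QShuffle p) = shAux p w.reverse x.reverse := by
  have h : shuffleBilin p (Finsupp.single w 1) (Finsupp.single x 1) =
      shAux p w.reverse x.reverse := by simp [shuffleBilin]
  exact (mul_eq_shuffleBilin _ _).trans h

theorem word_nil_mul_word (x : Word r) : (word [] * word x : QShuffle p) = word x := by
  rw [word_mul_word]
  rw [List.reverse_nil, shAux, List.reverse_reverse, word]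

theorem word_mul_word_nil (w : Word r) : (word w * word [] : QShuffle p) = word w := by
  rw [word_mul_word]
  rw [List.reverse_nil, shAux_nil_right, List.reverse_reverse, word]

theorem word_append_mul_word_append (w x : Word r) (a b : Fin r) :
    (word (w ++ [a]) * word (x ++ [b]) : QShuffle p) =
      snoc a (word w * word (x ++ [b])) +
        qq ^ (-pairW p (w ++ [a]) [b]) • snoc b (word (w ++ [a]) * word x) := by
  have hpair : pairW p (a :: w.reverse) [b] = pairW p (w ++ [a]) [b] := by
    rw [← pairW_reverse_left p (w ++ [a]), List.reverse_concat']
  simp only [word_mul_word, List.reverse_concat', shAux, hpair]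
  rfl

theorem coeff_nil_mul (f g : QShuffle p) : coeff [] (f * g) = coeff [] f * coeff [] g := by
  suffices h : (LinearMap.mul K (QShuffle p)).compr₂ (coeff []) =
      (LinearMap.mul K K).compl₁₂ (coeff []) (coeff []) from LinearMap.congr_fun₂ h f g
  refine hom_ext₂ fun w x => ?_
  simp only [LinearMap.compr₂_apply, LinearMap.compl₁₂_apply, LinearMap.mul_apply']
  rcases List.eq_nil_or_concat' w with rfl | ⟨w, a, rfl⟩
  · simp [word_nil_mul_word, coeff_word]
  rcases List.eq_nil_or_concat' x with rfl | ⟨x, b, rfl⟩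
  · simp [word_mul_word_nil, coeff_word]
  · simp [word_append_mul_word_append, coeff_nil_snoc, coeff_word]

theorem word_nil_mul (f : QShuffle p) : word [] * f = f :=
  LinearMap.congr_fun (f := LinearMap.mulLeft K (word [])) (g := LinearMap.id)
    (hom_ext word_nil_mul_word) f

theorem mul_word_nil (f : QShuffle p) : f * word [] = f :=
  LinearMap.congr_fun (f := LinearMap.mulRight K (word [])) (g := LinearMap.id)
    (hom_ext word_mul_word_nil) f

theorem lastDeriv_mul (c : Fin r) (f g : QShuffle p) :
    lastDeriv c (f * g) = lastDeriv c f * g + twist c f * lastDeriv c g := by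
  suffices h : (LinearMap.mul K (QShuffle p)).compr₂ (lastDeriv c) =
      (LinearMap.mul K (QShuffle p)).comp (lastDeriv c) +
        (LinearMap.mul K (QShuffle p)).compl₁₂ (twist c) (lastDeriv c) from
    LinearMap.congr_fun₂ h f g
  refine hom_ext₂ fun w x => ?_
  simp only [LinearMap.compr₂_apply, LinearMap.add_apply, LinearMap.comp_apply,
    LinearMap.compl₁₂_apply, LinearMap.mul_apply', twist_word, smul_mul_assoc]
  rcases List.eq_nil_or_concat' w with rfl | ⟨w, a, rfl⟩
  · simp [word_nil_mul, lastDeriv_word_nil, pairW]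
  rcases List.eq_nil_or_concat' x with rfl | ⟨x, b, rfl⟩
  · simp [mul_word_nil, lastDeriv_word_nil]
  · rw [word_append_mul_word_append, map_add, map_smul, lastDeriv_snoc, lastDeriv_snoc,
      lastDeriv_word_append, lastDeriv_word_append, ite_mul, zero_mul]
    by_cases hbc : b = c <;> simp [hbc]

theorem coeff_append_mul (f g : QShuffle p) (u : Word r) (c : Fin r) :
    coeff (u ++ [c]) (f * g) =
      coeff u (lastDeriv c f * g) + coeff u (twist c f * lastDeriv c g) := by
  rw [← coeff_lastDeriv, lastDeriv_mul, map_add]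

/- For `twist_mul` and `mul_assoc` the induction is on the word whose coefficients are compared: the
Leibniz rule strips its last letter, at the price of changing the factors. -/
theorem twist_mul (c : Fin r) (f g : QShuffle p) : twist c (f * g) = twist c f * twist c g := by
  refine ext_coeff fun u => ?_
  induction u using List.reverseRecOn generalizing f g with
  | nil => simp [coeff_twist, coeff_nil_mul, pairW]
  | append_singleton u a ih =>
    rw [← coeff_lastDeriv, lastDeriv_twist, lastDeriv_mul, map_smul, map_add, map_add, ih, ih,
      coeff_append_mul, lastDeriv_twist, lastDeriv_twist, twist_comm a c, smul_mul_assoc,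
      mul_smul_comm, map_smul, map_smul, smul_add]

protected theorem mul_assoc (f g h : QShuffle p) : f * g * h = f * (g * h) := by
  refine ext_coeff fun u => ?_
  induction u using List.reverseRecOn generalizing f g h with
  | nil => simp only [coeff_nil_mul, mul_assoc]
  | append_singleton u c ih =>
    simp only [coeff_append_mul, lastDeriv_mul, twist_mul, add_mul, mul_add, map_add, ih,
      add_assoc]

instance : Ring (QShuffle p) where
  mul_assoc := QShuffle.mul_assoc
  one := word []
  one_mul := word_nil_mul
  mul_one := mul_word_nil

instance : Algebra K (QShuffle p) := Algebra.ofModule smul_mul_assoc mul_smul_comm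

theorem one_eq_word_nil : (1 : QShuffle p) = word [] := rfl

/-- The generator `w_i` of the `q`-shuffle algebra. -/
def letter (i : Fin r) : QShuffle p := word [i]

theorem coeff_nil_letter (i : Fin r) : coeff [] (letter i : QShuffle p) = 0 := by
  simp [letter, coeff_word]

theorem lastDeriv_letter_self (i : Fin r) : lastDeriv i (letter i : QShuffle p) = 1 := by
  rw [letter, ← List.nil_append [i], lastDeriv_word_append, if_pos rfl, one_eq_word_nil]

theorem lastDeriv_letter_of_ne {i c : Fin r} (h : i ≠ c) :
    lastDeriv c (letter i : QShuffle p) = 0 := by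
  rw [letter, ← List.nil_append [i], lastDeriv_word_append, if_neg h]

theorem twist_letter (i c : Fin r) :
    twist c (letter i : QShuffle p) = qq ^ (-p i c) • letter i := by
  simp [letter, twist_word, pairW]

theorem shPow_single_one (i : Fin r) (k : ℕ) :
    shPow p (Finsupp.single [i] 1) k = (letter i : QShuffle p) ^ k := by
  induction k with
  | zero => rfl
  | succ k ih => rw [pow_succ', shPow, ih]; rfl

/-- The iterated `q`-commutator of `w_j` with `w_i`. At each step the twist is the one for which
`lastDeriv i` kills the commutator. -/
def serreElement (p : Fin r → Fin r → ℤ) (i j : Fin r) : ℕ → QShuffle p :=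
  iterQComm (fun m : ℕ => qq ^ (-(m * p i i + p j i))) (letter i) (letter j)

theorem serreElement_zero (i j : Fin r) : serreElement p i j 0 = letter j := rfl

theorem serreElement_succ (i j : Fin r) (m : ℕ) :
    serreElement p i j (m + 1) = serreElement p i j m * letter i -
      qq ^ (-(m * p i i + p j i)) • (letter i * serreElement p i j m) :=
  rfl

theorem coeff_nil_serreElement (i j : Fin r) (m : ℕ) : coeff [] (serreElement p i j m) = 0 := by
  cases m with
  | zero => exact coeff_nil_letter j
  | succ m => simp [serreElement_succ, coeff_nil_mul, coeff_nil_letter]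

theorem twist_serreElement (i j c : Fin r) (m : ℕ) :
    twist c (serreElement p i j m) = qq ^ (-(m * p i c + p j c)) • serreElement p i j m := by
  induction m with
  | zero => simp [serreElement_zero, twist_letter]
  | succ m ih =>
    have hexp : qq ^ (-((m + 1 : ℕ) * p i c + p j c)) =
        qq ^ (-(m * p i c + p j c)) * qq ^ (-p i c) := by
      rw [← qq_zpow_add]
      push_cast
      ring_nf
    simp only [serreElement_succ, map_sub, map_smul, twist_mul, ih, twist_letter,
      smul_mul_smul_comm, hexp, smul_sub]
    rw [smul_comm, mul_comm (qq ^ (-p i c))]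

theorem lastDeriv_serreElement_of_ne {i j c : Fin r} (hcj : c ≠ j) (m : ℕ) :
    lastDeriv c (serreElement p i j m) = 0 := by
  induction m with
  | zero => exact lastDeriv_letter_of_ne hcj.symm
  | succ m ih =>
    rw [serreElement_succ, map_sub, map_smul, lastDeriv_mul, lastDeriv_mul, ih]
    by_cases hic : i = c
    · subst hic
      simp [lastDeriv_letter_self, twist_serreElement]
    · simp [lastDeriv_letter_of_ne hic]

theorem lastDeriv_serreElement {i j : Fin r} (hij : i ≠ j) (m : ℕ) :
    lastDeriv j (serreElement p i j m) =
      (∏ t ∈ Finset.range m, (1 - qq ^ (-(t * p i i + p i j + p j i)))) • letter i ^ m := by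
  induction m with
  | zero => simp [serreElement_zero, lastDeriv_letter_self]
  | succ m ih =>
    have hexp : qq ^ (-(m * p i i + p i j + p j i)) =
        qq ^ (-(m * p i i + p j i)) * qq ^ (-p i j) := by
      rw [← qq_zpow_add]
      ring_nf
    rw [serreElement_succ, map_sub, map_smul, lastDeriv_mul, lastDeriv_mul, ih,
      lastDeriv_letter_of_ne hij, twist_letter, mul_zero, add_zero, zero_mul, zero_add,
      smul_mul_assoc, ← pow_succ, smul_mul_smul_comm, ← pow_succ', smul_smul, ← sub_smul,
      Finset.prod_range_succ, hexp]
    congr 1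
    ring

theorem serreElement_succ_eq_zero {i j : Fin r} (hij : i ≠ j) {n : ℕ}
    (hn : n * p i i + p i j + p j i = 0) : serreElement p i j (n + 1) = 0 := by
  refine eq_zero_of_lastDeriv_eq_zero (coeff_nil_serreElement i j _) fun c => ?_
  by_cases hcj : c = j
  · subst hcj
    rw [lastDeriv_serreElement hij, Finset.prod_range_succ, hn]
    simp
  · exact lastDeriv_serreElement_of_ne hcj _

theorem serreElement_succ_eq_sum_qBinom {i j : Fin r} {d : ℤ} (hd : d ≠ 0) {n : ℕ}
    (hii : p i i = 2 * d) (hji : p j i = d * -n) :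
    serreElement p i j (n + 1) = ∑ k ∈ Finset.range (n + 2),
      ((-1 : K) ^ k * qBinom d (n + 1) k) • (letter i ^ k * letter j * letter i ^ (n + 1 - k)) := by
  rw [serreElement, hii, hji, iterQComm_eq_sum_qBinom hd]
  simp

end QShuffle

open QShuffle in
theorem q_serre_in_shuffle_algebra_general (p : Fin r → Fin r → ℤ) {i j : Fin r} {d a : ℤ}
    (hd : d ≠ 0) (ha : a ≤ 0) (hii : p i i = 2 * d) (hij : p i j = d * a) (hji : p j i = d * a) :
    ∑ k ∈ Finset.range ((1 - a).toNat + 1),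
      ((-1 : K) ^ k * qBinom d ((1 - a).toNat) k) •
        shuffle p
          (shuffle p (shPow p (Finsupp.single [i] 1) k) (Finsupp.single [j] 1))
          (shPow p (Finsupp.single [i] 1) ((1 - a).toNat - k)) = 0 := by
  obtain ⟨n, rfl⟩ : ∃ n : ℕ, a = -n := ⟨(-a).toNat, by omega⟩
  have hne : i ≠ j := by
    rintro rfl
    have : (2 : ℤ) = -n := mul_left_cancel₀ hd (by linarith)
    omega
  have hserre : serreElement p i j (n + 1) = 0 :=
    serreElement_succ_eq_zero hne (by rw [hii, hij, hji]; ring)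
  rw [show (1 - -(n : ℤ)).toNat = n + 1 by omega]
  simp only [shPow_single_one]
  exact (serreElement_succ_eq_sum_qBinom hd hii hji).symm.trans hserre

/-- Lemma 2.2: the q-Serre relations hold in the q-shuffle algebra:
`Σ_{k+l=1−a_{ij}} (−1)^k [1−a_{ij} choose k]_i  w_i^{*k} * w_j * w_i^{*l} = 0` for `i ≠ j`. -/
theorem q_serre_in_shuffle_algebra {r : ℕ} (hr : 1 ≤ r) (C : CartanData r)
    (i j : Fin r) (hij : i ≠ j) :
    ∑ k ∈ Finset.range ((1 - C.a i j).toNat + 1),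
      ((-1 : K) ^ k * qBinom (C.d i) ((1 - C.a i j).toNat) k) •
        shuffle C.p
          (shuffle C.p (shPow C.p (Finsupp.single [i] 1) k) (Finsupp.single [j] 1))
          (shPow C.p (Finsupp.single [i] 1) ((1 - C.a i j).toNat - k)) = 0 := by
  have hd : C.d i ≠ 0 := by rcases C.dval i with h | h | h <;> omega
  exact q_serre_in_shuffle_algebra_general C.p hd (C.offdiag i j hij)
    (by rw [CartanData.p, C.diag, mul_comm]) rfl (C.dsymm i j).symm
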